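/- For all m, n ∈ ℕ (including 0), the W^{1,2}-inner product of Hermite functions, ⟨𝓗_m, 𝓗_n⟩_{W^{1,2}} := ∫_ℝ 𝓗_m(x)·𝓗_n(x) dx + ∫_ℝ 𝓗′_m(x)·𝓗′_n(x) dx, satisfies: ⟨𝓗_m, 𝓗_n⟩_{W^{1,2}} = 1 + π(2m+1) if m = n; ⟨𝓗_m, 𝓗_n⟩_{W^{1,2}} = −π·√(ℓ(ℓ−1)) with ℓ = max{m,n} if |m − n| = 2; and ⟨𝓗_m, 𝓗_n⟩_{W^{1,2}} = 0 otherwise. -/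

import Mathlib

open MeasureTheory Real

/-- The Hermite polynomial `H_m(x) = (−1)^m 2^{1/4−m} (m!)^{−1/2} π^{−m/2}
    exp(2πx²) (d^m/dx^m) exp(−2πx²)`. -/
noncomputable def hermitePoly (m : ℕ) (x : ℝ) : ℝ :=
  (-1 : ℝ) ^ m * (2 : ℝ) ^ ((1 : ℝ) / 4 - (m : ℝ)) * (Nat.factorial m : ℝ) ^ (-(1 : ℝ) / 2)
    * Real.pi ^ (-(m : ℝ) / 2) * Real.exp (2 * Real.pi * x ^ 2)
    * iteratedDeriv m (fun y => Real.exp (-(2 * Real.pi * y ^ 2))) x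

/-- The Hermite function `𝓗_m(x) = H_m(x) · exp(−πx²)`. -/
noncomputable def hermiteFun (m : ℕ) (x : ℝ) : ℝ :=
  hermitePoly m x * Real.exp (-(Real.pi * x ^ 2))

/-! With `u = 2√π x`, the function `𝓗_m` is `2^{1/4} (m!)^{-1/2} He_m(u) e^{-u²/4}`, where `He_m`
is the probabilists' Hermite polynomial. For the weight `e^{-u²/2}` the operator `p ↦ u p - p'`
that produces the `He_m` is adjoint to differentiation, and `He_m' = m He_{m-1}`; hence the `𝓗_m`
are orthonormal. The same facts give `𝓗_m' = √π (√m 𝓗_{m-1} - √(m+1) 𝓗_{m+1})`, so the integral of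
`𝓗_m' 𝓗_n'` is read off from orthonormality. -/

open Polynomial

section GaussianWeight

variable {R : Type*} [CommSemiring R] [Algebra R ℝ] {b : ℝ}

theorem hasDerivAt_exp_neg_mul_sq (b x : ℝ) :
    HasDerivAt (fun y ↦ exp (-b * y ^ 2)) (-(2 * b * x) * exp (-b * x ^ 2)) x := by
  convert! ((hasDerivAt_pow 2 x).const_mul (-b)).exp using 1
  push_cast
  ring

theorem hasDerivAt_aeval_mul_exp_neg_mul_sq (b : ℝ) (p : R[X]) (x : ℝ) :
    HasDerivAt (fun y ↦ aeval y p * exp (-b * y ^ 2))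
      (aeval x (derivative p) * exp (-b * x ^ 2)
        - 2 * b * (aeval x (X * p) * exp (-b * x ^ 2))) x := by
  convert! (p.hasDerivAt_aeval x).mul (hasDerivAt_exp_neg_mul_sq b x) using 1
  rw [map_mul, aeval_X]
  ring

theorem integrable_pow_mul_exp_neg_mul_sq (hb : 0 < b) (n : ℕ) :
    Integrable fun x : ℝ ↦ x ^ n * exp (-b * x ^ 2) := by
  have hn : (-1 : ℝ) < n := by linarith [n.cast_nonneg (α := ℝ)]
  simpa only [rpow_natCast] using integrable_rpow_mul_exp_neg_mul_sq hb hn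

theorem integrable_aeval_mul_exp_neg_mul_sq (hb : 0 < b) (p : R[X]) :
    Integrable fun x : ℝ ↦ aeval x p * exp (-b * x ^ 2) := by
  induction p using Polynomial.induction_on' with
  | add p q hp hq => simpa only [map_add, add_mul] using hp.fun_add hq
  | monomial n a =>
    simpa only [aeval_monomial, mul_assoc] using
      (integrable_pow_mul_exp_neg_mul_sq hb n).const_mul (algebraMap R ℝ a)

theorem integral_aeval_derivative_mul_exp_neg_mul_sq (hb : 0 < b) (p : R[X]) :
    ∫ x : ℝ, aeval x (derivative p) * exp (-b * x ^ 2)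
      = 2 * b * ∫ x : ℝ, aeval x (X * p) * exp (-b * x ^ 2) := by
  have hint_deriv := integrable_aeval_mul_exp_neg_mul_sq hb (derivative p)
  have hint_X := (integrable_aeval_mul_exp_neg_mul_sq hb (X * p)).const_mul (2 * b)
  rw [← sub_eq_zero, ← integral_const_mul, ← integral_sub hint_deriv hint_X]
  exact integral_eq_zero_of_hasDerivAt_of_integrable
    (hasDerivAt_aeval_mul_exp_neg_mul_sq b p) (hint_deriv.sub hint_X)
    (integrable_aeval_mul_exp_neg_mul_sq hb p)

theorem integrable_aeval_mul_exp_neg_sq_div_two (p : R[X]) :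
    Integrable fun x : ℝ ↦ aeval x p * exp (-(x ^ 2 / 2)) := by
  convert integrable_aeval_mul_exp_neg_mul_sq one_half_pos p using 4
  ring

theorem integral_aeval_derivative_mul_exp_neg_sq_div_two (p : R[X]) :
    ∫ x : ℝ, aeval x (derivative p) * exp (-(x ^ 2 / 2))
      = ∫ x : ℝ, aeval x (X * p) * exp (-(x ^ 2 / 2)) := by
  have hexponent (x : ℝ) : -(x ^ 2 / 2) = -(1 / 2) * x ^ 2 := by ring
  simpa only [hexponent, mul_one_div_cancel (two_ne_zero' ℝ), one_mul] using
    integral_aeval_derivative_mul_exp_neg_mul_sq one_half_pos p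

theorem integral_exp_neg_sq_div_two : ∫ x : ℝ, exp (-(x ^ 2 / 2)) = √(2 * π) := by
  convert integral_gaussian (1 / 2) using 4 <;> ring

end GaussianWeight

theorem integral_aeval_X_mul_sub_derivative_mul {R : Type*} [CommRing R] [Algebra R ℝ]
    (p q : R[X]) :
    ∫ x : ℝ, aeval x ((X * p - derivative p) * q) * exp (-(x ^ 2 / 2))
      = ∫ x : ℝ, aeval x (p * derivative q) * exp (-(x ^ 2 / 2)) := by
  have hLeibniz : (X * p - derivative p) * q = X * (p * q) - derivative (p * q)
      + p * derivative q := by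
    rw [derivative_mul]
    ring
  have hint (r : R[X]) := integrable_aeval_mul_exp_neg_sq_div_two r
  have hzero :
      ∫ x : ℝ, aeval x (X * (p * q) - derivative (p * q)) * exp (-(x ^ 2 / 2)) = 0 := by
    simp only [map_sub, sub_mul]
    rw [integral_sub (hint _) (hint _), integral_aeval_derivative_mul_exp_neg_sq_div_two, sub_self]
  simp only [hLeibniz, map_add, add_mul]
  rw [integral_add (hint _) (hint _), hzero, zero_add]

theorem derivative_hermite_succ (n : ℕ) :
    derivative (hermite (n + 1)) = (n + 1 : ℤ[X]) * hermite n := by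
  induction n with
  | zero => simp
  | succ n ih =>
    rw [hermite_succ (n + 1), derivative_sub, derivative_mul, derivative_X, ih, derivative_mul,
      hermite_succ n]
    simp only [derivative_add, derivative_natCast, derivative_one]
    push_cast
    ring

-- At `n = 0` the truncated index `n - 1` is harmless, since its coefficient vanishes.
theorem derivative_hermite (n : ℕ) : derivative (hermite n) = (n : ℤ[X]) * hermite (n - 1) := by
  cases n with
  | zero => simp
  | succ n => simpa using derivative_hermite_succ n

theorem integral_hermite_succ_mul (n : ℕ) (q : ℤ[X]) :
    ∫ x : ℝ, aeval x (hermite (n + 1) * q) * exp (-(x ^ 2 / 2))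
      = ∫ x : ℝ, aeval x (hermite n * derivative q) * exp (-(x ^ 2 / 2)) := by
  rw [hermite_succ, integral_aeval_X_mul_sub_derivative_mul]

theorem integral_hermite_succ_eq_zero (n : ℕ) :
    ∫ x : ℝ, aeval x (hermite (n + 1)) * exp (-(x ^ 2 / 2)) = 0 := by
  simpa using integral_hermite_succ_mul n 1

theorem integral_hermite_mul_hermite (m n : ℕ) :
    ∫ x : ℝ, aeval x (hermite m * hermite n) * exp (-(x ^ 2 / 2))
      = if m = n then m.factorial * √(2 * π) else 0 := by
  induction m generalizing n with
  | zero =>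
    cases n with
    | zero => simpa using integral_exp_neg_sq_div_two
    | succ n => simpa using integral_hermite_succ_eq_zero n
  | succ m ih =>
    cases n with
    | zero => simpa using integral_hermite_succ_eq_zero m
    | succ n =>
      have hpull (x : ℝ) : aeval x (hermite m * derivative (hermite (n + 1))) * exp (-(x ^ 2 / 2))
          = (n + 1) * (aeval x (hermite m * hermite n) * exp (-(x ^ 2 / 2))) := by
        simp only [derivative_hermite_succ, map_mul, map_add, map_natCast, map_one]
        ring
      simp only [integral_hermite_succ_mul, hpull, integral_const_mul, ih, add_left_inj]
      split_ifs with hmn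
      · rw [hmn, Nat.factorial_succ]
        push_cast
        ring
      · exact mul_zero _

theorem iteratedDeriv_exp_neg_mul_sq_div_two (n : ℕ) (c x : ℝ) :
    iteratedDeriv n (fun y ↦ exp (-((c * y) ^ 2 / 2))) x
      = c ^ n * ((-1) ^ n * aeval (c * x) (hermite n) * exp (-((c * x) ^ 2 / 2))) := by
  have hsmooth : ContDiff ℝ n fun y : ℝ ↦ exp (-(y ^ 2 / 2)) := by fun_prop
  rw [iteratedDeriv_comp_const_mul hsmooth, iteratedDeriv_eq_iterate]
  exact congrArg _ (deriv_gaussian_eq_hermite_mul_gaussian n (c * x))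

theorem two_mul_sqrt_pi_mul_sq_div_two (x : ℝ) : (2 * √π * x) ^ 2 / 2 = 2 * π * x ^ 2 := by
  rw [mul_pow, mul_pow, sq_sqrt pi_pos.le]
  ring

theorem hermitePoly_normalization (m : ℕ) :
    (2 : ℝ) ^ ((1 : ℝ) / 4 - m) * (m.factorial : ℝ) ^ (-(1 : ℝ) / 2) * π ^ (-(m : ℝ) / 2)
      * (2 * √π) ^ m = 2 ^ (1 / 4 : ℝ) / √m.factorial := by
  have htwo : (2 : ℝ) ^ ((1 : ℝ) / 4 - m) = 2 ^ (1 / 4 : ℝ) / 2 ^ m := by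
    rw [rpow_sub two_pos, rpow_natCast]
  have hfactorial : (m.factorial : ℝ) ^ (-(1 : ℝ) / 2) = (√m.factorial)⁻¹ := by
    rw [neg_div, rpow_neg (Nat.cast_nonneg _), sqrt_eq_rpow]
  have hpi : π ^ (-(m : ℝ) / 2) = (√π ^ m)⁻¹ := by
    rw [neg_div, rpow_neg pi_pos.le, sqrt_eq_rpow, ← rpow_mul_natCast pi_pos.le]
    ring_nf
  rw [htwo, hfactorial, hpi, mul_pow]
  have := sqrt_pos.2 pi_pos
  field_simp

theorem hermitePoly_eq_hermite (m : ℕ) (x : ℝ) :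
    hermitePoly m x = 2 ^ (1 / 4 : ℝ) / √m.factorial * aeval (2 * √π * x) (hermite m) := by
  have hsign : (-1 : ℝ) ^ m * (-1) ^ m = 1 := by rw [← mul_pow]; simp
  have hexp : exp (2 * π * x ^ 2) * exp (-(2 * π * x ^ 2)) = 1 := by rw [← exp_add]; simp
  simp only [hermitePoly, ← two_mul_sqrt_pi_mul_sq_div_two] at hexp ⊢
  rw [iteratedDeriv_exp_neg_mul_sq_div_two, ← hermitePoly_normalization]
  linear_combination (2 : ℝ) ^ ((1 : ℝ) / 4 - m) * (m.factorial : ℝ) ^ (-(1 : ℝ) / 2)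
    * π ^ (-(m : ℝ) / 2) * (2 * √π) ^ m * aeval (2 * √π * x) (hermite m)
    * (hsign + (-1) ^ m * (-1) ^ m * hexp)

theorem hermiteFun_eq_hermite (m : ℕ) (x : ℝ) :
    hermiteFun m x = 2 ^ (1 / 4 : ℝ) / √m.factorial
      * (aeval (2 * √π * x) (hermite m) * exp (-π * x ^ 2)) := by
  rw [hermiteFun, hermitePoly_eq_hermite, mul_assoc, neg_mul]

theorem hermiteFun_mul_hermiteFun (m n : ℕ) (x : ℝ) :
    hermiteFun m x * hermiteFun n x = √2 / (√m.factorial * √n.factorial)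
      * (aeval (2 * √π * x) (hermite m * hermite n) * exp (-((2 * √π * x) ^ 2 / 2))) := by
  have htwo : (2 : ℝ) ^ (1 / 4 : ℝ) * 2 ^ (1 / 4 : ℝ) = √2 := by
    rw [← rpow_add two_pos, sqrt_eq_rpow]
    norm_num
  have hexp : exp (-π * x ^ 2) * exp (-π * x ^ 2) = exp (-((2 * √π * x) ^ 2 / 2)) := by
    rw [← exp_add, two_mul_sqrt_pi_mul_sq_div_two]
    ring_nf
  rw [hermiteFun_eq_hermite, hermiteFun_eq_hermite, map_mul, ← htwo, ← hexp]
  ring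

theorem integrable_hermiteFun_mul_hermiteFun (m n : ℕ) :
    Integrable fun x ↦ hermiteFun m x * hermiteFun n x := by
  simp only [hermiteFun_mul_hermiteFun]
  exact ((integrable_aeval_mul_exp_neg_sq_div_two (hermite m * hermite n)).comp_mul_left'
    (by positivity)).const_mul _

theorem integral_hermiteFun_mul_hermiteFun (m n : ℕ) :
    ∫ x, hermiteFun m x * hermiteFun n x = if m = n then 1 else 0 := by
  simp only [hermiteFun_mul_hermiteFun, integral_const_mul]
  rw [Measure.integral_comp_mul_left
    (fun u ↦ aeval u (hermite m * hermite n) * exp (-(u ^ 2 / 2))), integral_hermite_mul_hermite]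
  split_ifs with hmn
  · subst hmn
    have hscale : (0 : ℝ) < 2 * √π := by positivity
    have hfactorial : (0 : ℝ) < m.factorial := mod_cast m.factorial_pos
    rw [mul_self_sqrt hfactorial.le, abs_of_pos (inv_pos.2 hscale), smul_eq_mul,
      sqrt_mul two_pos.le]
    field_simp
    simp
  · simp

theorem deriv_hermiteFun_eq_hermite (m : ℕ) (x : ℝ) :
    deriv (hermiteFun m) x = 2 ^ (1 / 4 : ℝ) / √m.factorial
      * (√π * (m * aeval (2 * √π * x) (hermite (m - 1)) - aeval (2 * √π * x) (hermite (m + 1)))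
        * exp (-π * x ^ 2)) := by
  have hscale : HasDerivAt (fun y ↦ 2 * √π * y) (2 * √π) x := by
    simpa using (hasDerivAt_id x).const_mul (2 * √π)
  have hhermite := ((hermite m).hasDerivAt_aeval (2 * √π * x)).comp x hscale
  have hderiv := (hhermite.mul (hasDerivAt_exp_neg_mul_sq π x)).const_mul
    (2 ^ (1 / 4 : ℝ) / √m.factorial)
  rw [funext (hermiteFun_eq_hermite m)]
  refine hderiv.deriv.trans ?_
  rw [hermite_succ, derivative_hermite]
  simp only [Function.comp_apply, map_sub, map_mul, map_natCast, aeval_X]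
  linear_combination 2 ^ (1 / 4 : ℝ) / √m.factorial * 2 * x * aeval (2 * √π * x) (hermite m)
    * exp (-π * x ^ 2) * sq_sqrt pi_pos.le

theorem natCast_div_sqrt_factorial (m : ℕ) :
    m / √m.factorial = √m / √(m - 1).factorial := by
  cases m with
  | zero => simp
  | succ m =>
    rw [Nat.factorial_succ, Nat.cast_mul, sqrt_mul (Nat.cast_nonneg _), ← div_div, div_sqrt,
      Nat.add_sub_cancel]

theorem one_div_sqrt_factorial (m : ℕ) :
    1 / √m.factorial = √(m + 1) / √(m + 1).factorial := by
  have hsucc : √((m : ℝ) + 1) ≠ 0 := by positivity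
  rw [Nat.factorial_succ, Nat.cast_mul, sqrt_mul (Nat.cast_nonneg _), Nat.cast_succ,
    ← div_div, div_self hsucc]

theorem deriv_hermiteFun (m : ℕ) (x : ℝ) :
    deriv (hermiteFun m) x
      = √π * (√m * hermiteFun (m - 1) x - √(m + 1) * hermiteFun (m + 1) x) := by
  rw [deriv_hermiteFun_eq_hermite, hermiteFun_eq_hermite, hermiteFun_eq_hermite]
  linear_combination √π * 2 ^ (1 / 4 : ℝ) * exp (-π * x ^ 2)
    * (aeval (2 * √π * x) (hermite (m - 1)) * natCast_div_sqrt_factorial m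
      - aeval (2 * √π * x) (hermite (m + 1)) * one_div_sqrt_factorial m)

theorem deriv_hermiteFun_mul_deriv_hermiteFun (m n : ℕ) (x : ℝ) :
    deriv (hermiteFun m) x * deriv (hermiteFun n) x
      = π * (√m * √n * (hermiteFun (m - 1) x * hermiteFun (n - 1) x)
        - √m * √(n + 1) * (hermiteFun (m - 1) x * hermiteFun (n + 1) x)
        - √n * √(m + 1) * (hermiteFun (n - 1) x * hermiteFun (m + 1) x)
        + √(m + 1) * √(n + 1) * (hermiteFun (m + 1) x * hermiteFun (n + 1) x)) := by
  rw [deriv_hermiteFun, deriv_hermiteFun, mul_mul_mul_comm, mul_self_sqrt pi_pos.le]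
  ring

theorem integral_deriv_hermiteFun_mul_deriv_hermiteFun (m n : ℕ) :
    ∫ x, deriv (hermiteFun m) x * deriv (hermiteFun n) x
      = π * ((if m = n then 2 * (m : ℝ) + 1 else 0)
        - (if m = n + 2 then √((n + 2) * (n + 1)) else 0)
        - if n = m + 2 then √((m + 2) * (m + 1)) else 0) := by
  have hint (i j : ℕ) (c : ℝ) := (integrable_hermiteFun_mul_hermiteFun i j).const_mul c
  have hlower : √m * √n * (if m - 1 = n - 1 then 1 else 0) = if m = n then (m : ℝ) else 0 := by
    cases m <;> cases n <;> simp +contextual [mul_self_sqrt, Nat.cast_add_one_pos, le_of_lt]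
  have hupper : √(m + 1) * √(n + 1) * (if m + 1 = n + 1 then 1 else 0)
      = if m = n then (m : ℝ) + 1 else 0 := by
    split_ifs <;> simp_all [mul_self_sqrt, Nat.cast_add_one_pos, le_of_lt]
  have hcross (i j : ℕ) : √i * √(j + 1) * (if i - 1 = j + 1 then 1 else 0)
      = if i = j + 2 then √((j + 2) * (j + 1)) else 0 := by
    have hindex : i - 1 = j + 1 ↔ i = j + 2 := by lia
    rw [sqrt_mul (by positivity), mul_ite, mul_one, mul_zero]
    simp +contextual [hindex]
  simp only [deriv_hermiteFun_mul_deriv_hermiteFun, integral_const_mul]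
  rw [integral_add (((hint _ _ _).sub' (hint _ _ _)).sub' (hint _ _ _)) (hint _ _ _),
    integral_sub ((hint _ _ _).sub' (hint _ _ _)) (hint _ _ _),
    integral_sub (hint _ _ _) (hint _ _ _)]
  simp only [integral_const_mul, integral_hermiteFun_mul_hermiteFun, hlower, hupper, hcross]
  split_ifs <;> ring

/-- The `W^{1,2}`-inner product of Hermite functions:
`⟨𝓗_m, 𝓗_n⟩ = 1 + π(2m+1)` if `m = n`; `= −π√(ℓ(ℓ−1))`, `ℓ = max{m,n}`, if `|m−n| = 2`;
and `= 0` otherwise. -/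
theorem hermiteFun_W12_inner (m n : ℕ) :
    (m = n →
      (∫ x : ℝ, hermiteFun m x * hermiteFun n x)
        + ∫ x : ℝ, deriv (hermiteFun m) x * deriv (hermiteFun n) x
        = 1 + Real.pi * (2 * (m : ℝ) + 1)) ∧
    ((m = n + 2 ∨ n = m + 2) →
      (∫ x : ℝ, hermiteFun m x * hermiteFun n x)
        + ∫ x : ℝ, deriv (hermiteFun m) x * deriv (hermiteFun n) x
        = -(Real.pi * Real.sqrt ((max m n : ℝ) * ((max m n : ℝ) - 1)))) ∧
    (m ≠ n → ¬(m = n + 2 ∨ n = m + 2) →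
      (∫ x : ℝ, hermiteFun m x * hermiteFun n x)
        + ∫ x : ℝ, deriv (hermiteFun m) x * deriv (hermiteFun n) x = 0) := by
  rw [integral_hermiteFun_mul_hermiteFun, integral_deriv_hermiteFun_mul_deriv_hermiteFun]
  refine ⟨?_, ?_, ?_⟩
  · rintro rfl
    simp
  · have hsub (k : ℕ) : (k : ℝ) + 2 - 1 = k + 1 := by ring
    have hfar (k : ℕ) : k ≠ k + 2 + 2 := by lia
    rintro (rfl | rfl) <;> simp [hsub, hfar]
  · intro hne hnot
    obtain ⟨hm, hn⟩ := not_or.1 hnot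
    simp [hne, hm, hn]
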